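/- arXiv:2406.18835 — 9 statements merged into one kernel-verified Lean document; each statement's English description precedes it below -/
import Mathlib

section
/- Let G be a finite simple graph on vertex set V equipped with a linear order that is a perfect elimination ordering (i.e., for every vertex v the left neighborhood N^left(v) is a clique). Then for any positive integer k, G is k-colorable if and only if |N^left(v)| ≤ k − 1 for every vertex v. -/
/-- If a linear order on the vertices of a finite simple graph `G` is a perfect elimination
ordering (every left neighborhood is a clique), then for any positive integer `k`, `G` is
`k`-colorable iff every left neighborhood has at most `k - 1` vertices. -/
theorem stmt0 {V : Type*} [Fintype V] [LinearOrder V] (G : SimpleGraph V)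
    (hpeo : ∀ v : V, G.IsClique {u | G.Adj u v ∧ u < v})
    (k : ℕ) (hk : 0 < k) :
    G.Colorable k ↔ ∀ v : V, ({u | G.Adj u v ∧ u < v} : Set V).ncard ≤ k - 1 := by
  constructor
  · rintro ⟨C⟩ v
    have h := Set.ncard_le_ncard_of_injOn (s := {u | G.Adj u v ∧ u < v})
      (t := ((Finset.univ.erase (C v) : Finset (Fin k)) : Set (Fin k))) (fun u => C u)
      (by
        intro u hu
        simpa using C.valid hu.1)
      (by
        intro a ha b hb hab
        by_contra hne
        exact C.valid (hpeo v ha hb hne) hab)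
      (Finset.finite_toSet _)
    rw [Set.ncard_coe_finset, Finset.card_erase_of_mem (Finset.mem_univ _)] at h
    simpa using h
  · intro h
    have key : ∀ s : Finset V, ∃ c : V → Fin k,
        ∀ a ∈ s, ∀ b ∈ s, G.Adj a b → c a ≠ c b := by
      intro s
      induction s using Finset.induction_on_max with
      | empty => exact ⟨fun _ => ⟨0, hk⟩, by simp⟩
      | insert v s hv ih =>
        obtain ⟨c, hc⟩ := ih
        have hcard : (c '' {u | G.Adj u v ∧ u < v}).ncard < (Set.univ : Set (Fin k)).ncard := by
          have h1 := Set.ncard_image_le (f := c) (Set.toFinite {u | G.Adj u v ∧ u < v})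
          have h2 := h v
          rw [Set.ncard_univ, Nat.card_fin]
          omega
        obtain ⟨x, -, hx⟩ := Set.exists_mem_notMem_of_ncard_lt_ncard hcard
        have hx' : ∀ u ∈ s, G.Adj u v → c u ≠ x := fun u hu ha he =>
          hx ⟨u, ⟨ha, hv u hu⟩, he⟩
        refine ⟨Function.update c v x, ?_⟩
        intro a ha b hb hab
        rcases Finset.mem_insert.1 ha with rfl | has
        · rcases Finset.mem_insert.1 hb with rfl | hbs
          · exact absurd hab (G.irrefl)
          · rw [Function.update_self, Function.update_of_ne (hv b hbs).ne]
            exact (hx' b hbs hab.symm).symm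
        · rcases Finset.mem_insert.1 hb with rfl | hbs
          · rw [Function.update_self, Function.update_of_ne (hv a has).ne]
            exact hx' a has hab
          · rw [Function.update_of_ne (hv a has).ne, Function.update_of_ne (hv b hbs).ne]
            exact hc a has b hbs hab
    obtain ⟨c, hc⟩ := key Finset.univ
    exact ⟨SimpleGraph.Coloring.mk c fun {a b} hab =>
      hc a (Finset.mem_univ _) b (Finset.mem_univ _) hab⟩
end

section
/- Let G be a finite simple graph on vertex set V equipped with a linear order that is a perfect elimination ordering of G, let S ⊆ V, and let k be a positive integer. Then the induced subgraph G[S] is k-colorable if and only if for every v ∈ S, |N^left(v) ∩ S| ≤ k − 1. In particular, if G[S] is k-colorable then the {0,1} indicator vector x of S satisfies the linear constraints x_v + Σ_{u ∈ N^left(v)} x_u ≤ k for all v ∈ V. -/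
theorem col_iff_aux {V : Type*} (G : SimpleGraph V) (S : Finset V) (k : ℕ) (hk : 0 < k) :
    (G.induce (S : Set V)).Colorable k ↔
      ∃ f : V → Fin k, ∀ u ∈ S, ∀ w ∈ S, G.Adj u w → f u ≠ f w := by
  classical
  constructor
  · rintro ⟨C⟩
    refine ⟨fun u => if h : u ∈ S then C ⟨u, h⟩ else ⟨0, hk⟩, ?_⟩
    intro u hu w hw h
    simp only [hu, hw, dif_pos]
    exact C.valid (v := ⟨u, hu⟩) (w := ⟨w, hw⟩) h
  · rintro ⟨f, hf⟩
    exact ⟨SimpleGraph.Coloring.mk (fun u => f u.1) (fun {u w} h => hf _ u.2 _ w.2 h)⟩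

theorem greedy_aux {V : Type*} [LinearOrder V] (G : SimpleGraph V) [DecidableRel G.Adj]
    (k : ℕ) (hk : 0 < k) (S : Finset V) :
    (∀ v ∈ S, (S.filter (fun u => G.Adj u v ∧ u < v)).card ≤ k - 1) →
      ∃ f : V → Fin k, ∀ u ∈ S, ∀ w ∈ S, G.Adj u w → f u ≠ f w := by
  induction S using Finset.induction_on_max with
  | empty => exact fun _ => ⟨fun _ => ⟨0, hk⟩, by simp⟩
  | insert a s ha ih =>
    intro h
    obtain ⟨f, hf⟩ := ih (fun v hv => (Finset.card_le_card (Finset.filter_subset_filter _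
      (Finset.subset_insert a s))).trans (h v (Finset.mem_insert_of_mem hv)))
    have h1 := h a (Finset.mem_insert_self a s)
    obtain ⟨c, hc⟩ : ∃ c : Fin k,
        c ∉ ((insert a s).filter (fun u => G.Adj u a ∧ u < a)).image f := by
      by_contra! hcon
      have h2 := Finset.card_le_card (fun c _ => hcon c : (Finset.univ : Finset (Fin k)) ⊆ _)
      have h3 := h2.trans Finset.card_image_le
      simp only [Finset.card_univ, Fintype.card_fin] at h3
      omega
    have hc' : ∀ u ∈ s, G.Adj u a → f u ≠ c := fun u hu hadj he =>
      hc (Finset.mem_image.2 ⟨u, Finset.mem_filter.2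
        ⟨Finset.mem_insert_of_mem hu, hadj, ha u hu⟩, he⟩)
    have hne : ∀ u ∈ s, u ≠ a := fun u hu => (ha u hu).ne
    refine ⟨Function.update f a c, ?_⟩
    intro u hu0 w hw0 hadj
    rcases Finset.mem_insert.1 hu0 with rfl | hu <;> rcases Finset.mem_insert.1 hw0 with rfl | hw
    · exact (G.loopless.irrefl _ hadj).elim
    · rw [Function.update_self, Function.update_of_ne (hne w hw)]
      exact (hc' w hw hadj.symm).symm
    · rw [Function.update_self, Function.update_of_ne (hne u hu)]
      exact hc' u hu hadj
    · rw [Function.update_of_ne (hne u hu), Function.update_of_ne (hne w hw)]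
      exact hf u hu w hw hadj

theorem clique_aux {V : Type*} (G : SimpleGraph V) (S : Finset V) (k : ℕ)
    (f : V → Fin k) (hf : ∀ u ∈ S, ∀ w ∈ S, G.Adj u w → f u ≠ f w)
    (T : Finset V) (hT : T ⊆ S) (hc : G.IsClique (T : Set V)) : T.card ≤ k := by
  have := Finset.card_le_card_of_injOn (s := T) (t := Finset.univ) f (by simp) (by
    intro u hu w hw he
    by_contra hne
    exact hf u (hT hu) w (hT hw) (hc hu hw hne) he)
  simpa using this

/-- For a perfect elimination ordering of a chordal graph `G`, a subset `S` and a positive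
integer `k`: `G[S]` is `k`-colorable iff every vertex `v ∈ S` has at most `k - 1` left
neighbors inside `S`; in particular, the 0/1 indicator vector of `S` satisfies the LP
constraints `x_v + ∑_{u ∈ N^left(v)} x_u ≤ k` for all `v`. -/
theorem stmt2 {V : Type*} [Fintype V] [LinearOrder V]
    (G : SimpleGraph V) [DecidableRel G.Adj]
    (hpeo : ∀ v : V, G.IsClique {u | G.Adj u v ∧ u < v})
    (S : Finset V) (k : ℕ) (hk : 0 < k) :
    ((G.induce (S : Set V)).Colorable k ↔
      ∀ v ∈ S, (S.filter (fun u => G.Adj u v ∧ u < v)).card ≤ k - 1)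
    ∧ ((G.induce (S : Set V)).Colorable k →
      ∀ v : V, (if v ∈ S then 1 else 0)
        + ∑ u ∈ Finset.univ.filter (fun u => G.Adj u v ∧ u < v),
            (if u ∈ S then 1 else 0) ≤ k) := by
  classical
  have key : (G.induce (S : Set V)).Colorable k → ∀ v : V, (if v ∈ S then 1 else 0)
      + (S.filter (fun u => G.Adj u v ∧ u < v)).card ≤ k := by
    intro h v
    obtain ⟨f, hf⟩ := (col_iff_aux G S k hk).1 h
    have hcl : G.IsClique ((S.filter (fun u => G.Adj u v ∧ u < v) : Finset V) : Set V) :=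
      (hpeo v).subset (fun u hu => (Finset.mem_filter.1 hu).2)
    by_cases hv : v ∈ S
    · have := clique_aux G S k f hf (insert v (S.filter (fun u => G.Adj u v ∧ u < v)))
        (Finset.insert_subset hv (Finset.filter_subset _ _)) (by
          rw [Finset.coe_insert]
          exact hcl.insert (fun b hb _ => (Finset.mem_filter.1 hb).2.1.symm))
      rw [Finset.card_insert_of_notMem (by simp)] at this
      rw [if_pos hv]; omega
    · have := clique_aux G S k f hf _ (Finset.filter_subset _ _) hcl
      rw [if_neg hv]; omega
  refine ⟨⟨fun h v hv => ?_, fun h => (col_iff_aux G S k hk).2 (greedy_aux G k hk S h)⟩,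
    fun h v => ?_⟩
  · have := key h v
    rw [if_pos hv] at this
    omega
  · have := key h v
    have e : ∑ u ∈ Finset.univ.filter (fun u => G.Adj u v ∧ u < v), (if u ∈ S then 1 else 0)
        = (S.filter (fun u => G.Adj u v ∧ u < v)).card := by
      rw [← Finset.card_filter]
      congr 1
      ext u
      simp [and_comm]
    rw [e]
    exact this
end

section
/- Let F be a finite index set, let (Y_u)_{u∈F} be pairwise independent random variables on a probability space, each taking values in {0,1}, with E[Y_u] = (1−f)·x_u where x_u ∈ [0,1] for each u, 0 < f ≤ 1, and Σ_{u∈F} x_u ≤ k for a real k > 0. Then Pr[Σ_{u∈F} Y_u ≥ k] ≤ 1/(f²·k). -/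
open MeasureTheory ProbabilityTheory

/-- If `(Y u)_{u ∈ F}` are pairwise independent `{0,1}`-valued random variables with means
`E[Y u] = (1 - f) * x u`, `x u ∈ [0,1]`, `0 < f ≤ 1`, and `∑ x u ≤ k`, then
`Pr[∑ Y u ≥ k] ≤ 1 / (f² k)`. -/
theorem stmt5 {Ω : Type*} [MeasureSpace Ω] [IsProbabilityMeasure (volume : Measure Ω)]
    {ι : Type*} (F : Finset ι) (Y : ι → Ω → ℝ) (x : ι → ℝ) (f k : ℝ)
    (hf0 : 0 < f) (hf1 : f ≤ 1) (hk : 0 < k)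
    (hmeas : ∀ u ∈ F, Measurable (Y u))
    (h01 : ∀ u ∈ F, ∀ ω, Y u ω = 0 ∨ Y u ω = 1)
    (hindep : ∀ u ∈ F, ∀ u' ∈ F, u ≠ u' → IndepFun (Y u) (Y u') volume)
    (hmean : ∀ u ∈ F, ∫ ω, Y u ω = (1 - f) * x u)
    (hx : ∀ u ∈ F, 0 ≤ x u ∧ x u ≤ 1)
    (hsum : ∑ u ∈ F, x u ≤ k) :
    (volume {ω | k ≤ ∑ u ∈ F, Y u ω}).toReal ≤ 1 / (f ^ 2 * k) := by
  have hL : ∀ u ∈ F, MemLp (Y u) 2 volume := by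
    intro u hu
    refine MemLp.of_bound (hmeas u hu).aestronglyMeasurable 1 (Filter.Eventually.of_forall ?_)
    intro ω
    rcases h01 u hu ω with h | h <;> simp [h]
  have hvar : ∀ u ∈ F, variance (Y u) volume ≤ x u := by
    intro u hu
    refine (variance_le_expectation_sq (hmeas u hu).aestronglyMeasurable).trans ?_
    have h2 : (Y u) ^ 2 = Y u := by
      funext ω
      rcases h01 u hu ω with h | h <;> simp [h]
    rw [h2, hmean u hu]
    nlinarith [(hx u hu).1]
  have hLS : MemLp (∑ u ∈ F, Y u) 2 volume := memLp_finset_sum' F hL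
  have hV : variance (∑ u ∈ F, Y u) volume ≤ k := by
    rw [IndepFun.variance_sum hL (fun u hu v hv h => hindep u hu v hv h)]
    exact (Finset.sum_le_sum hvar).trans hsum
  have hE : ∫ ω, (∑ u ∈ F, Y u) ω = (1 - f) * ∑ u ∈ F, x u := by
    simp only [Finset.sum_apply]
    rw [integral_finset_sum F (fun u hu => (hL u hu).integrable (by norm_num)), Finset.mul_sum]
    exact Finset.sum_congr rfl hmean
  have hc : 0 < f * k := mul_pos hf0 hk
  have hch := meas_ge_le_variance_div_sq hLS hc
  have hsub : {ω | k ≤ ∑ u ∈ F, Y u ω} ⊆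
      {ω | f * k ≤ |(∑ u ∈ F, Y u) ω - ∫ ω, (∑ u ∈ F, Y u) ω|} := by
    intro ω hω
    simp only [Set.mem_setOf_eq] at hω ⊢
    rw [hE, Finset.sum_apply]
    refine le_trans ?_ (le_abs_self _)
    nlinarith [mul_le_mul_of_nonneg_left hsum (sub_nonneg.2 hf1)]
  have h1 := ENNReal.toReal_le_of_le_ofReal (div_nonneg (variance_nonneg _ _) (sq_nonneg _))
    ((measure_mono hsub).trans hch)
  refine h1.trans ?_
  calc _ ≤ k / (f * k) ^ 2 := by gcongr
    _ = _ := by field_simp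
end

section
/- Let F be a finite index set and v ∉ F an additional index. Let (Y_u)_{u∈F∪{v}} be {0,1}-valued random variables on a probability space such that the family (Y_u)_{u∈F} is pairwise independent, Y_v is independent of Σ_{u∈F} Y_u, E[Y_u] = (1−f)·x_u with x_u ∈ [0,1] for all u ∈ F∪{v}, 0 < f ≤ 1, and Σ_{u∈F} x_u ≤ k for a real k > 0. Then Pr[Y_v = 1 and Σ_{u∈F} Y_u ≤ k−1] ≥ (1−f)·x_v·(1 − 1/(f²·k)). -/
open MeasureTheory ProbabilityTheory

/-- With `(Y u)_{u ∈ F}` pairwise independent `{0,1}`-valued, `Y v` independent of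
`∑_{u ∈ F} Y u`, means `E[Y u] = (1 - f) * x u` with `x u ∈ [0,1]`, `0 < f ≤ 1`, and
`∑_{u ∈ F} x u ≤ k`, we have
`Pr[Y v = 1 ∧ ∑_{u ∈ F} Y u ≤ k - 1] ≥ (1 - f) * x v * (1 - 1/(f² k))`. -/
theorem stmt6 {Ω : Type*} [MeasureSpace Ω] [IsProbabilityMeasure (volume : Measure Ω)]
    {ι : Type*} [DecidableEq ι] (F : Finset ι) (v : ι) (hv : v ∉ F)
    (Y : ι → Ω → ℝ) (x : ι → ℝ) (f k : ℝ)
    (hf0 : 0 < f) (hf1 : f ≤ 1) (hk : 0 < k)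
    (hmeas : ∀ u ∈ insert v F, Measurable (Y u))
    (h01 : ∀ u ∈ insert v F, ∀ ω, Y u ω = 0 ∨ Y u ω = 1)
    (hindep : ∀ u ∈ F, ∀ u' ∈ F, u ≠ u' → IndepFun (Y u) (Y u') volume)
    (hvindep : IndepFun (Y v) (fun ω => ∑ u ∈ F, Y u ω) volume)
    (hmean : ∀ u ∈ insert v F, ∫ ω, Y u ω = (1 - f) * x u)
    (hx : ∀ u ∈ insert v F, 0 ≤ x u ∧ x u ≤ 1)
    (hsum : ∑ u ∈ F, x u ≤ k) :
    (1 - f) * x v * (1 - 1 / (f ^ 2 * k))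
      ≤ (volume {ω | Y v ω = 1 ∧ (∑ u ∈ F, Y u ω) ≤ k - 1}).toReal := by
  have h1f : 0 ≤ 1 - f := by linarith
  have hxv := hx v (Finset.mem_insert_self v F)
  by_cases hfk : f ^ 2 * k ≤ 1
  · have hpos : 0 < f ^ 2 * k := by positivity
    have h1 : 1 ≤ 1 / (f ^ 2 * k) := by rw [le_div_iff₀ hpos]; linarith
    have h2 : (1 - f) * x v * (1 - 1 / (f ^ 2 * k)) ≤ 0 :=
      mul_nonpos_of_nonneg_of_nonpos (mul_nonneg h1f hxv.1) (by linarith)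
    exact h2.trans ENNReal.toReal_nonneg
  push Not at hfk
  have hmF : ∀ u ∈ F, Measurable (Y u) := fun u hu => hmeas u (Finset.mem_insert_of_mem hu)
  have hLp : ∀ u ∈ insert v F, MemLp (Y u) 2 (volume : Measure Ω) := by
    intro u hu
    refine MemLp.of_bound (hmeas u hu).aestronglyMeasurable 1 (ae_of_all _ fun ω => ?_)
    rcases h01 u hu ω with h | h <;> simp [h]
  have hLpF : ∀ u ∈ F, MemLp (Y u) 2 (volume : Measure Ω) :=
    fun u hu => hLp u (Finset.mem_insert_of_mem hu)
  set S : Ω → ℝ := fun ω => ∑ u ∈ F, Y u ω with hS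
  have hSm : Measurable S := Finset.measurable_sum F hmF
  have hSLp : MemLp S 2 (volume : Measure Ω) := memLp_finsetSum F hLpF
  have hSeq : S = ∑ u ∈ F, Y u := by ext ω; simp [hS]
  set μ : ℝ := ∫ ω, S ω with hμ
  have hμeq : μ = (1 - f) * ∑ u ∈ F, x u := by
    rw [hμ, hS, integral_finsetSum F fun u hu => (hLpF u hu).integrable (by norm_num),
      Finset.mul_sum]
    exact Finset.sum_congr rfl fun u hu => hmean u (Finset.mem_insert_of_mem hu)
  have hμle : μ ≤ (1 - f) * k := by rw [hμeq]; exact mul_le_mul_of_nonneg_left hsum h1f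
  have hVar : variance S volume ≤ (1 - f) * k := by
    have h1 : variance S volume = ∑ u ∈ F, variance (Y u) volume := by
      rw [hSeq]
      exact IndepFun.variance_sum hLpF (fun u hu u' hu' hne => hindep u hu u' hu' hne)
    rw [h1]
    refine le_trans ?_ hμle
    rw [hμeq, Finset.mul_sum]
    refine Finset.sum_le_sum fun u hu => ?_
    have hu' : u ∈ insert v F := Finset.mem_insert_of_mem hu
    rw [← hmean u hu', variance_eq_sub (hLpF u hu)]
    have : (Y u ^ 2) = Y u := by
      ext ω
      rcases h01 u hu' ω with h | h <;> simp [h]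
    rw [this]
    nlinarith [sq_nonneg (∫ ω, Y u ω)]
  have ht : 0 < f * k - 1 := by nlinarith
  set t := f * k - 1 with htd
  set m := (1 - f) * k with hm
  have hm0 : 0 ≤ m := mul_nonneg h1f hk.le
  set s := m / t with hs
  have hs0 : 0 ≤ s := div_nonneg hm0 ht.le
  have hZLp : MemLp (fun ω => S ω + (s - μ)) 2 (volume : Measure Ω) :=
    hSLp.add (memLp_const (s - μ))
  have hE : ∫ ω, (S ω + (s - μ)) ^ 2 = variance S volume + s ^ 2 := by
    have h1 := variance_eq_sub hZLp
    rw [variance_add_const hSLp.aestronglyMeasurable,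
      integral_add (hSLp.integrable (by norm_num)) (integrable_const _)] at h1
    simp only [integral_const, probReal_univ, one_smul, Pi.pow_apply] at h1
    rw [← hμ] at h1
    have h2 : μ + (s - μ) = s := by ring
    rw [h2] at h1
    linarith
  have hmark := mul_meas_ge_le_integral_of_nonneg (μ := (volume : Measure Ω))
    (f := fun ω => (S ω + (s - μ)) ^ 2) (ae_of_all _ fun ω => sq_nonneg _)
    hZLp.integrable_sq ((t + s) ^ 2)
  rw [hE] at hmark
  set A : Set Ω := {ω | S ω ≤ k - 1} with hA
  have hAm : MeasurableSet A := measurableSet_le hSm measurable_const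
  have hsub : Aᶜ ⊆ {ω | (t + s) ^ 2 ≤ (S ω + (s - μ)) ^ 2} := by
    intro ω hω
    simp only [hA, Set.mem_compl_iff, Set.mem_ofPred_eq, not_le] at hω ⊢
    refine pow_le_pow_left₀ (by positivity) ?_ 2
    have : k = m + (t + 1) := by rw [hm, htd]; ring
    linarith
  have hAc : volume.real Aᶜ ≤ 1 / (f ^ 2 * k) := by
    have h1 : (t + s) ^ 2 * volume.real Aᶜ ≤ m + s ^ 2 := by
      refine le_trans (mul_le_mul_of_nonneg_left (measureReal_mono hsub) (sq_nonneg _)) ?_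
      exact hmark.trans (by linarith)
    have hst : s * t = m := by rw [hs]; field_simp
    have h2 : (t ^ 2 + m) * volume.real Aᶜ ≤ m := by
      have h3 : (t + s) * ((t ^ 2 + m) * volume.real Aᶜ) ≤ (t + s) * m := by
        have e1 : (t + s) * ((t ^ 2 + m) * volume.real Aᶜ)
            = t * ((t + s) ^ 2 * volume.real Aᶜ) := by rw [← hst]; ring
        have e2 : (t + s) * m = t * (m + s ^ 2) := by rw [← hst]; ring
        rw [e1, e2]
        exact mul_le_mul_of_nonneg_left h1 ht.le
      exact le_of_mul_le_mul_left h3 (by positivity)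
    have key : m * (f ^ 2 * k - 1) ≤ t ^ 2 := by
      have hq : 0 ≤ k * (1 - 3 * f) + f ^ 3 * k ^ 2 + 1 := by
        by_cases h3 : f ≤ 1 / 3
        · have := mul_nonneg hk.le (show 0 ≤ 1 - 3 * f by linarith)
          positivity
        · push Not at h3
          have hf3 : 0 < 4 * f ^ 3 := by positivity
          have : 0 ≤ 4 * f ^ 3 * (k * (1 - 3 * f) + f ^ 3 * k ^ 2 + 1) := by
            have e : 4 * f ^ 3 * (k * (1 - 3 * f) + f ^ 3 * k ^ 2 + 1)
              = (2 * f ^ 3 * k + (1 - 3 * f)) ^ 2 + (f - 1) ^ 2 * (4 * f - 1) := by ring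
            rw [e]
            have : 0 ≤ 4 * f - 1 := by linarith
            positivity
          exact nonneg_of_mul_nonneg_right this hf3
      rw [hm, htd]
      linear_combination hq
    have hpos : 0 < f ^ 2 * k := by positivity
    have htm : 0 < t ^ 2 + m := by positivity
    rw [le_div_iff₀ hpos]
    refine le_of_mul_le_mul_left (a := t ^ 2 + m) ?_ htm
    have := mul_le_mul_of_nonneg_right h2 hpos.le
    linarith
  have hAge : 1 - 1 / (f ^ 2 * k) ≤ volume.real A := by
    have := probReal_compl_eq_one_sub (μ := (volume : Measure Ω)) hAm
    linarith
  have hYv : volume.real {ω | Y v ω = 1} = (1 - f) * x v := by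
    rw [← hmean v (Finset.mem_insert_self v F)]
    have hms : MeasurableSet {ω | Y v ω = 1} :=
      hmeas v (Finset.mem_insert_self v F) (measurableSet_singleton 1)
    rw [← integral_indicator_one hms]
    congr 1
    ext ω
    rcases h01 v (Finset.mem_insert_self v F) ω with h | h <;> simp [Set.indicator, h]
  have hprod : volume {ω | Y v ω = 1 ∧ S ω ≤ k - 1}
      = volume {ω | Y v ω = 1} * volume A :=
    hvindep.measure_inter_preimage_eq_mul {1} (Set.Iic (k - 1))
      (measurableSet_singleton 1) measurableSet_Iic
  change _ ≤ (volume {ω | Y v ω = 1 ∧ S ω ≤ k - 1}).toReal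
  rw [hprod, ENNReal.toReal_mul]
  change _ ≤ volume.real {ω | Y v ω = 1} * volume.real A
  rw [hYv]
  exact mul_le_mul_of_nonneg_left hAge (mul_nonneg h1f hxv.1)
end

section
/- Let F be a finite index set and v ∉ F an additional index, and let k ≥ 1 be a real number. Let (Y_u)_{u∈F∪{v}} be {0,1}-valued random variables on a probability space such that the family (Y_u)_{u∈F} is pairwise independent, Y_v is independent of Σ_{u∈F} Y_u, E[Y_u] = (1−k^{−1/3})·x_u with x_u ∈ [0,1] for all u ∈ F∪{v}, and Σ_{u∈F} x_u ≤ k. Then Pr[Y_v = 1 and Σ_{u∈F} Y_u ≤ k−1] ≥ (1 − 2·k^{−1/3})·x_v. -/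
open MeasureTheory ProbabilityTheory

/-- The per-vertex guarantee of the LP rounding for maximum `k`-colorable subgraph: with
`f = k^(-1/3)` and `k ≥ 1`, under the hypotheses of pairwise independence,
`Pr[Y v = 1 ∧ ∑_{u ∈ F} Y u ≤ k - 1] ≥ (1 - 2 k^(-1/3)) * x v`. -/
theorem stmt7 {Ω : Type*} [MeasureSpace Ω] [IsProbabilityMeasure (volume : Measure Ω)]
    {ι : Type*} [DecidableEq ι] (F : Finset ι) (v : ι) (hv : v ∉ F)
    (Y : ι → Ω → ℝ) (x : ι → ℝ) (k : ℝ) (hk : 1 ≤ k)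
    (hmeas : ∀ u ∈ insert v F, Measurable (Y u))
    (h01 : ∀ u ∈ insert v F, ∀ ω, Y u ω = 0 ∨ Y u ω = 1)
    (hindep : ∀ u ∈ F, ∀ u' ∈ F, u ≠ u' → IndepFun (Y u) (Y u') volume)
    (hvindep : IndepFun (Y v) (fun ω => ∑ u ∈ F, Y u ω) volume)
    (hmean : ∀ u ∈ insert v F, ∫ ω, Y u ω = (1 - k ^ (-(1/3) : ℝ)) * x u)
    (hx : ∀ u ∈ insert v F, 0 ≤ x u ∧ x u ≤ 1)
    (hsum : ∑ u ∈ F, x u ≤ k) :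
    (1 - 2 * k ^ (-(1/3) : ℝ)) * x v
      ≤ (volume {ω | Y v ω = 1 ∧ (∑ u ∈ F, Y u ω) ≤ k - 1}).toReal := by
  have hmF : ∀ u ∈ F, u ∈ insert v F := fun u hu => Finset.mem_insert_of_mem hu
  have hmv : v ∈ insert v F := Finset.mem_insert_self v F
  obtain ⟨m, hm⟩ : ∃ m : ℝ, m = k ^ (1/3 : ℝ) := ⟨_, rfl⟩
  have hk0 : 0 < k := by linarith
  have hm1 : 1 ≤ m := by rw [hm]; exact Real.one_le_rpow hk (by norm_num)
  have hm3 : m ^ 3 = k := by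
    rw [hm, ← Real.rpow_natCast, ← Real.rpow_mul hk0.le]; norm_num
  have hf : k ^ (-(1/3) : ℝ) = m⁻¹ := by rw [Real.rpow_neg hk0.le, hm]
  rw [hf] at hmean ⊢
  have hxv := hx v hmv
  by_cases hm2 : m < 2
  · have h1 : 1 - 2 * m⁻¹ ≤ 0 := by
      have : (2:ℝ)⁻¹ ≤ m⁻¹ := inv_anti₀ (by linarith) hm2.le
      norm_num at this
      linarith
    exact (mul_nonpos_of_nonpos_of_nonneg h1 hxv.1).trans ENNReal.toReal_nonneg
  push Not at hm2
  have hmi : m * m⁻¹ = 1 := mul_inv_cancel₀ (by linarith)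
  have hmi1 : m⁻¹ ≤ 1 := inv_le_one_of_one_le₀ hm1
  have hLp : ∀ u ∈ insert v F, MemLp (Y u) 2 volume := fun u hu =>
    MemLp.of_bound (hmeas u hu).aestronglyMeasurable 1
      (Filter.Eventually.of_forall fun ω => by rcases h01 u hu ω with h | h <;> simp [h])
  have hSm : Measurable (fun ω => ∑ u ∈ F, Y u ω) :=
    Finset.measurable_fun_sum F fun u hu => hmeas u (hmF u hu)
  have hSLp : MemLp (fun ω => ∑ u ∈ F, Y u ω) 2 volume :=
    memLp_finset_sum F fun u hu => hLp u (hmF u hu)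
  have hES : ∫ ω, ∑ u ∈ F, Y u ω = (1 - m⁻¹) * ∑ u ∈ F, x u := by
    rw [integral_finset_sum _ fun u hu => (hLp u (hmF u hu)).integrable (by norm_num),
      Finset.mul_sum]
    exact Finset.sum_congr rfl fun u hu => hmean u (hmF u hu)
  have hESle : ∫ ω, ∑ u ∈ F, Y u ω ≤ m ^ 3 - m ^ 2 := by
    rw [hES]
    calc _ ≤ (1 - m⁻¹) * m ^ 3 := by
          rw [hm3]; exact mul_le_mul_of_nonneg_left hsum (by linarith)
      _ = m ^ 3 - m ^ 2 * (m * m⁻¹) := by ring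
      _ = _ := by rw [hmi, mul_one]
  have hvar1 : ∀ u ∈ F, variance (Y u) volume ≤ ∫ ω, Y u ω := fun u hu => by
    refine (variance_le_expectation_sq (hmeas u (hmF u hu)).aestronglyMeasurable).trans
      (le_of_eq ?_)
    congr 1
    ext ω
    rcases h01 u (hmF u hu) ω with h | h <;> simp [h]
  have hvar : variance (fun ω => ∑ u ∈ F, Y u ω) volume ≤ m ^ 3 - m ^ 2 := by
    have h := IndepFun.variance_sum (μ := volume) (X := Y) (s := F)
      (fun u hu => hLp u (hmF u hu)) (fun u hu w hw huw => hindep u hu w hw huw)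
    have e : (∑ u ∈ F, Y u) = fun ω => ∑ u ∈ F, Y u ω := by ext ω; simp
    rw [e] at h
    rw [h]
    refine (Finset.sum_le_sum hvar1).trans ?_
    rw [← integral_finset_sum _ fun u hu => (hLp u (hmF u hu)).integrable (by norm_num)]
    exact hESle
  have hc : 0 < m ^ 2 - 1 := by nlinarith
  have hcheb := meas_ge_le_variance_div_sq hSLp hc
  have hA : MeasurableSet {ω | ∑ u ∈ F, Y u ω ≤ k - 1} := measurableSet_le hSm measurable_const
  have hP : volume.real {ω | ∑ u ∈ F, Y u ω ≤ k - 1}ᶜ ≤ (m - 1)⁻¹ := by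
    have h1 : volume.real {ω | ∑ u ∈ F, Y u ω ≤ k - 1}ᶜ ≤
        variance (fun ω => ∑ u ∈ F, Y u ω) volume / (m ^ 2 - 1) ^ 2 := by
      refine ENNReal.toReal_le_of_le_ofReal
        (div_nonneg (variance_nonneg _ _) (sq_nonneg _)) ((measure_mono ?_).trans hcheb)
      intro ω hω
      simp only [Set.mem_compl_iff, Set.mem_setOf_eq, not_le] at hω ⊢
      exact le_trans (by linarith) (le_abs_self _)
    refine h1.trans ?_
    rw [div_le_iff₀ (by positivity), inv_mul_eq_div, le_div_iff₀ (by linarith)]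
    have : variance (fun ω => ∑ u ∈ F, Y u ω) volume * (m - 1) ≤ (m ^ 3 - m ^ 2) * (m - 1) :=
      mul_le_mul_of_nonneg_right hvar (by linarith)
    nlinarith [mul_nonneg (sq_nonneg (m - 1)) (by linarith : 0 ≤ 2 * m + 1)]
  rw [probReal_compl_eq_one_sub hA] at hP
  have hB : MeasurableSet {ω | Y v ω = 1} := hmeas v hmv (measurableSet_singleton 1)
  have hPv : volume.real {ω | Y v ω = 1} = (1 - m⁻¹) * x v := by
    rw [← hmean v hmv, ← integral_indicator_one hB]
    congr 1
    ext ω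
    rcases h01 v hmv ω with h | h <;> simp [Set.indicator, h]
  have hprod : volume.real {ω | Y v ω = 1 ∧ (∑ u ∈ F, Y u ω) ≤ k - 1} =
      volume.real {ω | Y v ω = 1} * volume.real {ω | ∑ u ∈ F, Y u ω ≤ k - 1} := by
    have h := hvindep.measure_inter_preimage_eq_mul {1} (Set.Iic (k - 1))
      (measurableSet_singleton 1) measurableSet_Iic
    rw [measureReal_def, measureReal_def, measureReal_def, ← ENNReal.toReal_mul]
    exact congrArg ENNReal.toReal h
  change _ ≤ volume.real _
  rw [hprod, hPv]
  have key : 1 - 2 * m⁻¹ = (1 - m⁻¹) * (1 - (m - 1)⁻¹) := by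
    have : m ≠ 0 := by linarith
    have : m - 1 ≠ 0 := by linarith
    field_simp
    ring
  rw [key, mul_right_comm]
  exact mul_le_mul_of_nonneg_left (by linarith) (mul_nonneg (by linarith) hxv.1)
end

section
/- Let c > 1, h > 0, and γ ≥ 0 be real numbers, let N be a positive integer, and let k_j = h·c^j for 0 ≤ j ≤ N with k_{−1} = 0. Let p_{−1}, p_0, …, p_N be real numbers with p_{−1} = 1 and p_N = 0. Then Σ_{j=0}^{N} (p_{j−1} − p_j)·γ·(Σ_{i=0}^{j−1} k_i + (k_j+1)/2) = (γ/2)·((c+1)/(c−1))·Σ_{j=0}^{N} p_{j−1}·(k_j − k_{j−1}) + γ·(1/2 − h/(c−1)). -/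
/-- With `k_j = h c^j` (and `k_{-1} = 0`) and survival probabilities `p_{-1} = 1`, `p_N = 0`
(encoded as `P j = p_{j-1}` with `P 0 = 1`, `P (N+1) = 0`):
`∑_{j=0}^N (p_{j-1} - p_j) γ (∑_{i<j} k_i + (k_j+1)/2)
  = (γ/2)((c+1)/(c-1)) ∑_{j=0}^N p_{j-1} (k_j - k_{j-1}) + γ (1/2 - h/(c-1))`. -/
theorem stmt9 (c h γ : ℝ) (hc : 1 < c) (hh : 0 < h) (hγ : 0 ≤ γ)
    (N : ℕ) (hN : 0 < N) (P : ℕ → ℝ) (hP0 : P 0 = 1) (hPN : P (N + 1) = 0) :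
    ∑ j ∈ Finset.range (N + 1), (P j - P (j + 1)) * γ *
        ((∑ i ∈ Finset.range j, h * c ^ i) + (h * c ^ j + 1) / 2)
      = (γ / 2) * ((c + 1) / (c - 1)) *
          (∑ j ∈ Finset.range (N + 1),
            P j * (h * c ^ j - if j = 0 then 0 else h * c ^ (j - 1)))
        + γ * (1 / 2 - h / (c - 1)) := by
  have hc1 : c - 1 ≠ 0 := by linarith
  have hA : ∀ j : ℕ, (∑ i ∈ Finset.range j, h * c ^ i) + (h * c ^ j + 1) / 2
      = h * c ^ j * ((c + 1) / (c - 1)) / 2 + (1 / 2 - h / (c - 1)) := by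
    intro j
    rw [← Finset.mul_sum, geom_sum_eq (by linarith)]
    field_simp
    ring
  simp only [hA]
  have key : ∀ M : ℕ, ∑ j ∈ Finset.range (M + 1), (P j - P (j + 1)) * γ *
        (h * c ^ j * ((c + 1) / (c - 1)) / 2 + (1 / 2 - h / (c - 1)))
      = (γ / 2) * ((c + 1) / (c - 1)) *
          (∑ j ∈ Finset.range (M + 1),
            P j * (h * c ^ j - if j = 0 then 0 else h * c ^ (j - 1)))
        + γ * (1 / 2 - h / (c - 1)) * P 0
        - P (M + 1) * γ * (h * c ^ M * ((c + 1) / (c - 1)) / 2 + (1 / 2 - h / (c - 1))) := by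
    intro M
    induction M with
    | zero => simp; ring
    | succ M ih =>
      rw [Finset.sum_range_succ, ih, Finset.sum_range_succ _ (M + 1)]
      simp only [Nat.succ_ne_zero, if_false, Nat.add_sub_cancel]
      ring
  rw [key N, hP0, hPN]
  ring
end

section
/- Let ρ ∈ (0,1] and c > 1 be real numbers with c·(1−ρ) < 1, and let N ≥ 1 be an integer. Let Δ_0, …, Δ_N be nonnegative reals with Δ_0 + Δ_1 = c·Δ_0 and Δ_j = c·Δ_{j−1} for 2 ≤ j ≤ N. Let y_{−1}, y_0, …, y_{N−1} ∈ [0,1] with y_{−1} = 0, and let p_{−1}, p_0, …, p_{N−1} ∈ [0,1] with p_{−1} = 1 satisfy p_j ≤ ρ·(1 − y_j) + (1−ρ)·p_{j−1} for 0 ≤ j ≤ N−1. Then Σ_{j=0}^{N} p_{j−1}·Δ_j ≤ (ρ/(1 − c·(1−ρ)))·Σ_{j=0}^{N} (1 − y_{j−1})·Δ_j. -/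
/-- The geometric-recurrence bound in the minimum sum coloring analysis. With
`Δ_0 + Δ_1 = c Δ_0`, `Δ_j = c Δ_{j-1}` for `2 ≤ j ≤ N`, survival probabilities
`p_{j-1}` (encoded as `P j`, `P 0 = p_{-1} = 1`) and coverages `y_{j-1}` (encoded as `Y j`,
`Y 0 = y_{-1} = 0`) satisfying `p_j ≤ ρ (1 - y_j) + (1 - ρ) p_{j-1}`:
`∑_{j=0}^N p_{j-1} Δ_j ≤ (ρ / (1 - c(1-ρ))) ∑_{j=0}^N (1 - y_{j-1}) Δ_j`. -/
theorem stmt10 (ρ c : ℝ) (hρ0 : 0 < ρ) (hρ1 : ρ ≤ 1) (hc : 1 < c)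
    (hcρ : c * (1 - ρ) < 1) (N : ℕ) (hN : 1 ≤ N)
    (Δ : ℕ → ℝ) (hΔ : ∀ j ≤ N, 0 ≤ Δ j)
    (hΔ01 : Δ 0 + Δ 1 = c * Δ 0) (hΔrec : ∀ j, 2 ≤ j → j ≤ N → Δ j = c * Δ (j - 1))
    (Y : ℕ → ℝ) (hY : ∀ j ≤ N, 0 ≤ Y j ∧ Y j ≤ 1) (hY0 : Y 0 = 0)
    (P : ℕ → ℝ) (hP : ∀ j ≤ N, 0 ≤ P j ∧ P j ≤ 1) (hP0 : P 0 = 1)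
    (hrec : ∀ j ≤ N - 1, P (j + 1) ≤ ρ * (1 - Y (j + 1)) + (1 - ρ) * P j) :
    ∑ j ∈ Finset.range (N + 1), P j * Δ j
      ≤ (ρ / (1 - c * (1 - ρ))) * ∑ j ∈ Finset.range (N + 1), (1 - Y j) * Δ j := by
  have ha : 0 < 1 - c * (1 - ρ) := by linarith
  have key : ∀ n, n + 1 ≤ N →
      (1 - c * (1 - ρ)) * ∑ j ∈ Finset.range (n + 2), P j * Δ j
        + c * (1 - ρ) * (P (n + 1) * Δ (n + 1))
      ≤ ρ * ∑ j ∈ Finset.range (n + 2), (1 - Y j) * Δ j := by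
    intro n
    induction n with
    | zero =>
      intro h
      have h1 := mul_le_mul_of_nonneg_right (hrec 0 (by omega)) (hΔ 1 h)
      have e : Δ 1 = c * Δ 0 - Δ 0 := by linarith
      simp only [Finset.sum_range_succ, Finset.sum_range_zero, hP0, hY0, zero_add] at h1 ⊢
      rw [e] at h1 ⊢
      nlinarith [h1]
    | succ n ih =>
      intro h
      have h0 := ih (by omega)
      have h1 := mul_le_mul_of_nonneg_right (hrec (n + 1) (by omega)) (hΔ (n + 1 + 1) h)
      have e : Δ (n + 1 + 1) = c * Δ (n + 1) := hΔrec (n + 1 + 1) (by omega) h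
      rw [Finset.sum_range_succ _ (n + 2), Finset.sum_range_succ _ (n + 2)]
      change _ * (_ + P (n + 1 + 1) * Δ (n + 1 + 1)) + _ ≤
        ρ * (_ + (1 - Y (n + 1 + 1)) * Δ (n + 1 + 1))
      rw [e] at h1 ⊢
      linarith [h0, h1]
  obtain ⟨m, rfl⟩ : ∃ m, N = m + 1 := ⟨N - 1, by omega⟩
  have hk := key m le_rfl
  have hnn : 0 ≤ c * (1 - ρ) * (P (m + 1) * Δ (m + 1)) :=
    mul_nonneg (mul_nonneg (by linarith) (by linarith))
      (mul_nonneg (hP _ le_rfl).1 (hΔ _ le_rfl))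
  rw [div_mul_eq_mul_div, le_div_iff₀ ha]
  linarith
end

section
/- Let c > 1 and let k ≥ 1 be a real number. For h ≥ 1 define σ(h, k) = min{ h·c^j : j a nonnegative integer, h·c^j ≥ k }. Then ∫_0^1 σ(c^γ, k) dγ = ((c−1)/ln c)·k. -/
lemma sInf_aux (c x : ℝ) (hc : 1 < c) (γ : ℝ) (n : ℕ) (h1 : x ≤ γ + n) (h2 : γ + n < x + 1) :
    sInf {t : ℝ | ∃ j : ℕ, t = c ^ γ * c ^ j ∧ c ^ x ≤ t} = c ^ (γ + n) := by
  have hc0 : 0 < c := by linarith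
  have key : ∀ j : ℕ, c ^ γ * c ^ j = c ^ (γ + (j:ℝ)) := fun j => by
    rw [Real.rpow_add hc0, Real.rpow_natCast]
  apply IsLeast.csInf_eq
  constructor
  · exact ⟨n, (key n).symm, Real.rpow_le_rpow_of_exponent_le hc.le h1⟩
  · rintro t ⟨j, rfl, hj⟩
    rw [key] at hj ⊢
    rw [Real.rpow_le_rpow_left_iff hc] at hj ⊢
    have : (n:ℝ) < j + 1 := by linarith
    have : n < j + 1 := by exact_mod_cast this
    have : (n:ℝ) ≤ j := by exact_mod_cast Nat.lt_succ_iff.mp this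
    linarith

lemma int_aux (c : ℝ) (hc : 1 < c) (F : ℝ → ℝ) (a b : ℝ) (n : ℕ) (hab : a ≤ b)
    (h : ∀ γ ∈ Set.Ioo a b, F γ = c ^ (γ + n)) :
    IntervalIntegrable F MeasureTheory.volume a b ∧
      ∫ γ in a..b, F γ = (c ^ (b + n) - c ^ (a + n)) / Real.log c := by
  have hc0 : 0 < c := by linarith
  have hl : 0 < Real.log c := Real.log_pos hc
  have hcont : Continuous (fun γ : ℝ => c ^ (γ + n)) :=
    Continuous.rpow continuous_const (by fun_prop) (fun _ => Or.inl hc0.ne')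
  have hae : ∀ᵐ γ ∂MeasureTheory.volume, γ ∈ Set.uIoc a b → c ^ (γ + n) = F γ := by
    have : ∀ᵐ γ : ℝ ∂MeasureTheory.volume, γ ≠ b := by
      simp [MeasureTheory.ae_iff]
    filter_upwards [this] with γ hγ hm
    rw [Set.uIoc_of_le hab] at hm
    exact (h γ ⟨hm.1, lt_of_le_of_ne hm.2 hγ⟩).symm
  constructor
  · refine (hcont.intervalIntegrable a b).congr_ae ?_
    exact (MeasureTheory.ae_restrict_iff' measurableSet_uIoc).2 hae
  · rw [← intervalIntegral.integral_congr_ae hae]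
    rw [intervalIntegral.integral_eq_sub_of_hasDerivAt
      (f := fun γ => c ^ (γ + n) / Real.log c) _ (hcont.intervalIntegrable a b)]
    · ring
    · intro y _
      have := (((hasDerivAt_id y).add_const (n:ℝ)).const_rpow hc0).div_const (Real.log c)
      refine HasDerivAt.congr_deriv this ?_
      change Real.log c * 1 * c ^ (y + (n:ℝ)) / Real.log c = c ^ (y + (n:ℝ))
      field_simp

/-- For `c > 1` and `k ≥ 1`, with `σ(h, k)` the smallest element of `h, hc, hc², …` that is
at least `k`, we have `∫_0^1 σ(c^γ, k) dγ = ((c - 1)/ln c) k`. -/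
theorem stmt12 (c k : ℝ) (hc : 1 < c) (hk : 1 ≤ k) :
    ∫ γ in (0:ℝ)..1, sInf {t : ℝ | ∃ j : ℕ, t = c ^ γ * c ^ j ∧ k ≤ t}
      = ((c - 1) / Real.log c) * k := by
  have hc0 : 0 < c := by linarith
  obtain ⟨x, hx0, rfl⟩ : ∃ x : ℝ, 0 ≤ x ∧ c ^ x = k :=
    ⟨Real.logb c k, Real.logb_nonneg hc hk, Real.rpow_logb hc0 hc.ne' (by linarith)⟩
  have hm1 := Nat.floor_le hx0
  have hm2 := Nat.lt_floor_add_one x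
  set m := ⌊x⌋₊
  obtain ⟨i1, e1⟩ := int_aux c hc
    (fun γ => sInf {t : ℝ | ∃ j : ℕ, t = c ^ γ * c ^ j ∧ c ^ x ≤ t}) 0 (x - m) (m + 1)
    (by linarith) (fun γ hγ => sInf_aux c x hc γ (m + 1)
      (by push_cast; linarith [hγ.1]) (by push_cast; linarith [hγ.2]))
  obtain ⟨i2, e2⟩ := int_aux c hc
    (fun γ => sInf {t : ℝ | ∃ j : ℕ, t = c ^ γ * c ^ j ∧ c ^ x ≤ t}) (x - m) 1 m
    (by linarith) (fun γ hγ => sInf_aux c x hc γ m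
      (by linarith [hγ.1]) (by linarith [hγ.2]))
  rw [← intervalIntegral.integral_add_adjacent_intervals i1 i2, e1, e2]
  have a1 : x - m + ((m + 1 : ℕ) : ℝ) = x + 1 := by push_cast; ring
  have a2 : (0:ℝ) + ((m + 1 : ℕ) : ℝ) = 1 + m := by push_cast; ring
  have a3 : x - m + (m : ℝ) = x := by ring
  rw [a1, a2, a3, Real.rpow_add hc0 x 1, Real.rpow_one]
  ring
end

section
/- There exists a unique real number μ > 1 satisfying μ·ln μ = μ + 1; this μ lies in the interval (3.59, 3.60), and for every real c > 1 one has (c+1)/(2·ln c) ≥ μ/2, with equality when c = μ. -/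
theorem stmt14_aux (a b : ℝ) (ha : 1 < a) (hab : a < b) (h1 : a * Real.log a = a + 1)
    (h2 : b * Real.log b = b + 1) : False := by
  have hl : Real.log a < Real.log b := Real.log_lt_log (by linarith) hab
  have e1 : a * (Real.log a - 1) = 1 := by linarith
  have e2 : b * (Real.log b - 1) = 1 := by linarith
  have hp : 0 < Real.log a - 1 := by
    by_contra h
    nlinarith
  nlinarith

theorem stmt14_tangent (m c : ℝ) (hm : 0 < m) (hc : 0 < c) :
    Real.log c ≤ Real.log m + (c / m - 1) := by
  have h := Real.log_le_sub_one_of_pos (div_pos hc hm)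
  rw [Real.log_div hc.ne' hm.ne'] at h
  linarith

/-- There is a unique real `μ > 1` with `μ ln μ = μ + 1`; it lies in `(3.59, 3.60)`, and for
every `c > 1` one has `(c+1)/(2 ln c) ≥ μ/2`, with equality at `c = μ`. -/
theorem stmt14 :
    ∃ μ : ℝ, (1 < μ ∧ μ * Real.log μ = μ + 1) ∧
      (∀ μ' : ℝ, 1 < μ' → μ' * Real.log μ' = μ' + 1 → μ' = μ) ∧
      3.59 < μ ∧ μ < 3.60 ∧
      (∀ c : ℝ, 1 < c → μ / 2 ≤ (c + 1) / (2 * Real.log c)) ∧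
      (μ + 1) / (2 * Real.log μ) = μ / 2 := by
  have h36 : Real.log 3.60 = Real.log 2 + 2 * Real.log 3 - Real.log 5 := by
    rw [show (3.60 : ℝ) = 2 * (3 * 3) / 5 by norm_num, Real.log_div (by norm_num) (by norm_num),
      Real.log_mul (by norm_num) (by norm_num), Real.log_mul (by norm_num) (by norm_num)]
    ring
  have h359 := stmt14_tangent 3.60 3.59 (by norm_num) (by norm_num)
  have a1 := Real.log_two_gt_d9
  have a2 := Real.log_two_lt_d9
  have a3 := Real.log_three_gt_d9
  have a4 := Real.log_three_lt_d9
  have a5 := Real.log_five_gt_d9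
  have a6 := Real.log_five_lt_d9
  have hcont : ContinuousOn (fun x : ℝ => x * Real.log x - x) (Set.Icc 3.59 3.60) :=
    (Real.continuous_mul_log.sub continuous_id).continuousOn
  have hmem : (1 : ℝ) ∈ Set.Ioo ((3.59 : ℝ) * Real.log 3.59 - 3.59)
      ((3.60 : ℝ) * Real.log 3.60 - 3.60) := by
    constructor
    · norm_num at *
      linarith
    · norm_num at *
      linarith
  obtain ⟨m, ⟨hm1, hm2⟩, hm⟩ := intermediate_value_Ioo (by norm_num) hcont hmem
  have hm' : m * Real.log m = m + 1 := by
    simp only at hm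
    linarith
  have h1 : 1 < m := lt_trans (by norm_num) hm1
  have h0 : 0 < m := by linarith
  refine ⟨m, ⟨h1, hm'⟩, ?_, hm1, hm2, ?_, ?_⟩
  · intro x hx hxe
    rcases lt_trichotomy x m with h | h | h
    · exact (stmt14_aux x m hx h hxe hm').elim
    · exact h
    · exact (stmt14_aux m x h1 h hm' hxe).elim
  · intro c hc
    have hl := Real.log_pos hc
    have ht := stmt14_tangent m c h0 (by linarith)
    have hmul := mul_le_mul_of_nonneg_left ht h0.le
    have e : m * (Real.log m + (c / m - 1)) = c + 1 := by
      have : m * (c / m) = c := by field_simp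
      linarith
    rw [div_le_div_iff₀ (by norm_num) (by linarith)]
    linarith
  · have hl := Real.log_pos h1
    rw [← hm']
    field_simp
end
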